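/- For x, y > 0 let H(x,y) = (x/2 + y)^{x+2y} / ((x+y)^{x+y} · y^y). Then H is differentiable in each variable with ∂_x H(x,y) = H(x,y) · log((x+2y)/(2x+2y)) ≤ 0 and ∂_y H(x,y) = H(x,y) · log((x+2y)²/(4y(x+y))) ≥ 0; consequently, for each fixed y > 0 the function x ↦ H(x,y) is nonincreasing, for each fixed x > 0 the function y ↦ H(x,y) is nondecreasing, H(x,y) ≤ 1 for all x, y > 0, and lim_{y→∞} H(x,y) = 1 for every fixed x > 0. -/

import Mathlib

open Real Filter

/-- The function `H(x,y) = (x/2+y)^{x+2y} / ((x+y)^{x+y} y^y)`. -/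
noncomputable def Hfun (x y : ℝ) : ℝ :=
  (x / 2 + y) ^ (x + 2 * y) / ((x + y) ^ (x + y) * y ^ y)

/-!
For `y > 0` and `x + y > 0`, `-log H(x, y)` is the gap in the midpoint convexity inequality for
`t ↦ t log t` at the points `x + y` and `y`. Convexity gives `H ≤ 1`, while `log z ≤ z - 1` bounds
the gap at `a`, `b` by `(a - b)² / (a + b)`, here `x² / (x + 2y)`, which vanishes as `y → ∞`.
-/

/-- The midpoint convexity gap `f(a) + f(b) - 2 f((a + b) / 2)` of `f(t) = t log t`; it is the
negative logarithm of `H`, with `a = x + y` and `b = y`. -/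
noncomputable def mulLogGap (a b : ℝ) : ℝ :=
  a * log a + b * log b - 2 * ((a + b) / 2 * log ((a + b) / 2))

section mulLogGap

variable {a b : ℝ}

lemma mulLogGap_nonneg (ha : 0 ≤ a) (hb : 0 ≤ b) : 0 ≤ mulLogGap a b := by
  have hmid : (a + b) / 2 * log ((a + b) / 2) ≤ (a * log a + b * log b) / 2 := by
    have hconv := convexOn_mul_log.2 ha hb one_half_pos.le one_half_pos.le (add_halves 1)
    simpa only [smul_eq_mul, one_div_mul_eq_div, ← add_div] using hconv
  unfold mulLogGap
  linarith

lemma mulLogGap_eq_mul_log_div (ha : 0 < a) (hb : 0 < b) :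
    mulLogGap a b = a * log (2 * a / (a + b)) + b * log (2 * b / (a + b)) := by
  have hab : a + b ≠ 0 := by positivity
  rw [mulLogGap, log_div hab two_ne_zero, log_div (by positivity) hab, log_div (by positivity) hab,
    log_mul two_ne_zero ha.ne', log_mul two_ne_zero hb.ne']
  ring

lemma mulLogGap_le_sq_div (ha : 0 < a) (hb : 0 < b) :
    mulLogGap a b ≤ (a - b) ^ 2 / (a + b) := calc
  mulLogGap a b = a * log (2 * a / (a + b)) + b * log (2 * b / (a + b)) :=
    mulLogGap_eq_mul_log_div ha hb
  _ ≤ a * (2 * a / (a + b) - 1) + b * (2 * b / (a + b) - 1) := by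
    gcongr <;> exact log_le_sub_one_of_pos (by positivity)
  _ = (a - b) ^ 2 / (a + b) := by
    field_simp
    ring

lemma hasDerivAt_mulLogGap {u v : ℝ → ℝ} {u' v' t : ℝ} (hu : HasDerivAt u u' t)
    (hv : HasDerivAt v v' t) (hut : 0 < u t) (hvt : 0 < v t) :
    HasDerivAt (fun s => mulLogGap (u s) (v s))
      (u' * log (2 * u t / (u t + v t)) + v' * log (2 * v t / (u t + v t))) t := by
  have hsum : u t + v t ≠ 0 := by positivity
  have hmid := (hasDerivAt_mul_log (div_ne_zero hsum two_ne_zero)).comp t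
    ((hu.add hv).div_const 2)
  have hgap := (((hasDerivAt_mul_log hut.ne').comp t hu).add
    ((hasDerivAt_mul_log hvt.ne').comp t hv)).sub (hmid.const_mul 2)
  refine hgap.congr_deriv ?_
  rw [log_div hsum two_ne_zero, log_div (by positivity) hsum, log_div (by positivity) hsum,
    log_mul two_ne_zero hut.ne', log_mul two_ne_zero hvt.ne']
  ring

end mulLogGap

section Hfun

variable {x y : ℝ}

lemma Hfun_eq_exp_neg_mulLogGap (hy : 0 < y) (hxy : 0 < x + y) :
    Hfun x y = exp (-mulLogGap (x + y) y) := by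
  have hmid : 0 < x / 2 + y := by linarith
  rw [Hfun, rpow_def_of_pos hmid, rpow_def_of_pos hxy, rpow_def_of_pos hy, ← exp_add, ← exp_sub,
    mulLogGap, show (x + y + y) / 2 = x / 2 + y by ring]
  ring_nf

lemma Hfun_pos (hy : 0 < y) (hxy : 0 < x + y) : 0 < Hfun x y := by
  rw [Hfun_eq_exp_neg_mulLogGap hy hxy]
  exact exp_pos _

lemma Hfun_le_one (hy : 0 < y) (hxy : 0 < x + y) : Hfun x y ≤ 1 := by
  rw [Hfun_eq_exp_neg_mulLogGap hy hxy, exp_le_one_iff, neg_nonpos]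
  exact mulLogGap_nonneg hxy.le hy.le

lemma one_sub_sq_div_le_Hfun (hy : 0 < y) (hxy : 0 < x + y) :
    1 - x ^ 2 / (x + 2 * y) ≤ Hfun x y := calc
  1 - x ^ 2 / (x + 2 * y) = 1 - (x + y - y) ^ 2 / (x + y + y) := by ring_nf
  _ ≤ 1 - mulLogGap (x + y) y := by
    gcongr
    exact mulLogGap_le_sq_div hxy hy
  _ ≤ exp (-mulLogGap (x + y) y) := one_sub_le_exp_neg _
  _ = Hfun x y := (Hfun_eq_exp_neg_mulLogGap hy hxy).symm

lemma hasDerivAt_Hfun_left (hy : 0 < y) (hxy : 0 < x + y) :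
    HasDerivAt (fun x' => Hfun x' y) (Hfun x y * log ((x + 2 * y) / (2 * x + 2 * y))) x := by
  have hgap := hasDerivAt_mulLogGap ((hasDerivAt_id' x).add_const y) (hasDerivAt_const x y) hxy hy
  have hHfun : (fun x' => Hfun x' y) =ᶠ[nhds x] fun x' => exp (-mulLogGap (x' + y) y) := by
    filter_upwards [lt_mem_nhds (neg_lt_iff_pos_add.mpr hxy)] with x' hx'
    exact Hfun_eq_exp_neg_mulLogGap hy (neg_lt_iff_pos_add.mp hx')
  refine (hgap.fun_neg.exp.congr_of_eventuallyEq hHfun).congr_deriv ?_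
  rw [Hfun_eq_exp_neg_mulLogGap hy hxy, one_mul, zero_mul, add_zero, ← log_inv, inv_div]
  congr 3 <;> ring

lemma hasDerivAt_Hfun_right (hy : 0 < y) (hxy : 0 < x + y) :
    HasDerivAt (fun y' => Hfun x y')
      (Hfun x y * log ((x + 2 * y) ^ 2 / (4 * y * (x + y)))) y := by
  have hgap := hasDerivAt_mulLogGap ((hasDerivAt_id' y).const_add x) (hasDerivAt_id' y) hxy hy
  have hHfun : (fun y' => Hfun x y') =ᶠ[nhds y] fun y' => exp (-mulLogGap (x + y') y') := by
    filter_upwards [lt_mem_nhds hy, lt_mem_nhds (neg_lt_iff_pos_add'.mpr hxy)] with y' hy' hxy'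
    exact Hfun_eq_exp_neg_mulLogGap hy' (neg_lt_iff_pos_add'.mp hxy')
  refine (hgap.fun_neg.exp.congr_of_eventuallyEq hHfun).congr_deriv ?_
  rw [Hfun_eq_exp_neg_mulLogGap hy hxy, one_mul, one_mul,
    ← log_mul (by positivity) (by positivity), ← log_inv]
  congr 2
  field_simp
  ring

lemma Hfun_mul_log_left_nonpos (hx : 0 ≤ x) (hy : 0 < y) :
    Hfun x y * log ((x + 2 * y) / (2 * x + 2 * y)) ≤ 0 := by
  refine mul_nonpos_of_nonneg_of_nonpos (Hfun_pos hy (by positivity)).le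
    (log_nonpos (by positivity) ?_)
  rw [div_le_one (by positivity)]
  linarith

lemma Hfun_mul_log_right_nonneg (hy : 0 < y) (hxy : 0 < x + y) :
    0 ≤ Hfun x y * log ((x + 2 * y) ^ 2 / (4 * y * (x + y))) := by
  refine mul_nonneg (Hfun_pos hy hxy).le (log_nonneg ?_)
  rw [one_le_div (by positivity)]
  linarith [sq_nonneg x]

lemma antitoneOn_Hfun_left (hy : 0 < y) : AntitoneOn (fun x => Hfun x y) (Set.Ici 0) := by
  have hderiv {x : ℝ} (hx : 0 ≤ x) := hasDerivAt_Hfun_left hy (by positivity : 0 < x + y)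
  exact antitoneOn_of_hasDerivWithinAt_nonpos (convex_Ici 0)
    (fun x hx => (hderiv hx).continuousAt.continuousWithinAt)
    (fun x hx => (hderiv (interior_subset hx)).hasDerivWithinAt)
    fun x hx => Hfun_mul_log_left_nonpos (interior_subset hx) hy

lemma monotoneOn_Hfun_right (x : ℝ) :
    MonotoneOn (fun y => Hfun x y) (Set.Ioi (max 0 (-x))) := by
  have hpos {y : ℝ} (hy : y ∈ Set.Ioi (max 0 (-x))) : 0 < y ∧ 0 < x + y :=
    (max_lt_iff.mp hy).imp_right neg_lt_iff_pos_add'.mp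
  have hderiv {y : ℝ} (hy : y ∈ Set.Ioi (max 0 (-x))) :=
    hasDerivAt_Hfun_right (hpos hy).1 (hpos hy).2
  exact monotoneOn_of_hasDerivWithinAt_nonneg (convex_Ioi _)
    (fun y hy => (hderiv hy).continuousAt.continuousWithinAt)
    (fun y hy => (hderiv (interior_subset hy)).hasDerivWithinAt)
    fun y hy => (hpos (interior_subset hy)).elim Hfun_mul_log_right_nonneg

lemma tendsto_Hfun_atTop (x : ℝ) : Tendsto (fun y => Hfun x y) atTop (nhds 1) := by
  have hden : Tendsto (fun y : ℝ => x + 2 * y) atTop atTop :=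
    tendsto_atTop_add_const_left _ x (tendsto_id.const_mul_atTop two_pos)
  have hlower : Tendsto (fun y : ℝ => 1 - x ^ 2 / (x + 2 * y)) atTop (nhds 1) := by
    simpa only [sub_zero] using (hden.const_div_atTop (x ^ 2)).const_sub 1
  have hpos : ∀ᶠ y : ℝ in atTop, 0 < y ∧ 0 < x + y :=
    (eventually_gt_atTop 0).and <|
      (eventually_gt_atTop (-x)).mono fun _ => neg_lt_iff_pos_add'.mp
  exact tendsto_of_tendsto_of_tendsto_of_le_of_le' hlower tendsto_const_nhds
    (hpos.mono fun _ h => one_sub_sq_div_le_Hfun h.1 h.2)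
    (hpos.mono fun _ h => Hfun_le_one h.1 h.2)

end Hfun

theorem Hfun_properties_general :
    (∀ x y : ℝ, 0 < y → 0 < x + y →
      HasDerivAt (fun x' => Hfun x' y)
        (Hfun x y * log ((x + 2 * y) / (2 * x + 2 * y))) x ∧
      (0 ≤ x → Hfun x y * log ((x + 2 * y) / (2 * x + 2 * y)) ≤ 0) ∧
      HasDerivAt (fun y' => Hfun x y')
        (Hfun x y * log ((x + 2 * y) ^ 2 / (4 * y * (x + y)))) y ∧
      0 ≤ Hfun x y * log ((x + 2 * y) ^ 2 / (4 * y * (x + y)))) ∧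
    (∀ y : ℝ, 0 < y → AntitoneOn (fun x => Hfun x y) (Set.Ici 0)) ∧
    (∀ x : ℝ, MonotoneOn (fun y => Hfun x y) (Set.Ioi (max 0 (-x)))) ∧
    (∀ x y : ℝ, 0 < y → 0 < x + y → Hfun x y ≤ 1) ∧
    (∀ x : ℝ, Tendsto (fun y => Hfun x y) atTop (nhds 1)) :=
  ⟨fun _ _ hy hxy => ⟨hasDerivAt_Hfun_left hy hxy, fun hx => Hfun_mul_log_left_nonpos hx hy,
      hasDerivAt_Hfun_right hy hxy, Hfun_mul_log_right_nonneg hy hxy⟩,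
    fun _ => antitoneOn_Hfun_left, monotoneOn_Hfun_right, fun _ _ => Hfun_le_one,
    tendsto_Hfun_atTop⟩

/-- `H(x,y) = (x/2+y)^{x+2y}/((x+y)^{x+y} y^y)` is differentiable in each variable with
`∂ₓH = H log((x+2y)/(2x+2y)) ≤ 0` and `∂_yH = H log((x+2y)²/(4y(x+y))) ≥ 0`; hence `H`
is nonincreasing in `x`, nondecreasing in `y`, satisfies `H(x,y) ≤ 1`, and
`H(x,y) → 1` as `y → ∞` for fixed `x > 0`. -/
theorem Hfun_properties :
    (∀ x y : ℝ, 0 < x → 0 < y →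
      HasDerivAt (fun x' => Hfun x' y)
        (Hfun x y * Real.log ((x + 2 * y) / (2 * x + 2 * y))) x ∧
      Hfun x y * Real.log ((x + 2 * y) / (2 * x + 2 * y)) ≤ 0 ∧
      HasDerivAt (fun y' => Hfun x y')
        (Hfun x y * Real.log ((x + 2 * y) ^ 2 / (4 * y * (x + y)))) y ∧
      0 ≤ Hfun x y * Real.log ((x + 2 * y) ^ 2 / (4 * y * (x + y)))) ∧
    (∀ y : ℝ, 0 < y → ∀ x₁ x₂ : ℝ, 0 < x₁ → x₁ ≤ x₂ → Hfun x₂ y ≤ Hfun x₁ y) ∧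
    (∀ x : ℝ, 0 < x → ∀ y₁ y₂ : ℝ, 0 < y₁ → y₁ ≤ y₂ → Hfun x y₁ ≤ Hfun x y₂) ∧
    (∀ x y : ℝ, 0 < x → 0 < y → Hfun x y ≤ 1) ∧
    (∀ x : ℝ, 0 < x → Tendsto (fun y => Hfun x y) atTop (nhds 1)) := by
  obtain ⟨hderiv, hanti, hmono, hle, hlim⟩ := Hfun_properties_general
  refine ⟨fun x y hx hy => ?_, fun y hy x₁ x₂ hx₁ h => hanti y hy hx₁.le (hx₁.le.trans h) h,
    fun x hx y₁ y₂ hy₁ h => ?_, fun x y hx hy => hle x y hy (add_pos hx hy), fun x _ => hlim x⟩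
  · obtain ⟨hleft, hnonpos, hright⟩ := hderiv x y hy (add_pos hx hy)
    exact ⟨hleft, hnonpos hx.le, hright⟩
  · have hmax : max 0 (-x) < y₁ := max_lt hy₁ (by linarith)
    exact hmono x hmax (hmax.trans_le h) h
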